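/- Let ζ := exp(2πi/7) ∈ ℂ and for k ∈ ℤ set T(k) := ζ^{6k}/((1-ζ)(1-ζ³)) + ζ^{5k}/((1-ζ²)(1-ζ⁶)) + ζ^{3k}/((1-ζ⁴)(1-ζ⁵)). Then T(k+7) = T(k) for all k ∈ ℤ, and T(0) = 1, T(1) = 0, T(2) = 0, T(3) = 1, T(4) = ζ³ + ζ⁵ + ζ⁶, T(5) = -1, T(6) = ζ + ζ² + ζ⁴. -/

import Mathlib

/-!
Put `f x = x ^ m / ((1 - x) * (1 - x ^ 3))`. Since `2 ^ 3 ≡ 1 [MOD 7]`, the number `T k` is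
`f ζ + f (ζ ^ 2) + f (ζ ^ 4)` with `m = 6 * k`. Clearing the denominator of `f x` turns it into a
combination of powers of `x`, so that `7 * T k` is an integral combination of the sums
`ζ ^ j + ζ ^ (2 * j) + ζ ^ (4 * j)`. Such a sum equals `3` if `7 ∣ j`, and otherwise it is one of
the two quadratic Gaussian periods `η = ζ + ζ ^ 2 + ζ ^ 4` and `θ = ζ ^ 3 + ζ ^ 5 + ζ ^ 6`,
according to whether `j` is a square mod `7`; moreover `η + θ = -1`.
-/

theorem zpow_eq_zpow_of_modEq₀ {G : Type*} [GroupWithZero G] {x : G} {n : ℕ} (hx₀ : x ≠ 0)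
    (hx : x ^ n = 1) {i j : ℤ} (hij : i ≡ j [ZMOD n]) : x ^ i = x ^ j := by
  obtain ⟨c, hc⟩ := hij.dvd
  rw [← add_sub_cancel i j, hc, zpow_add₀ hx₀, zpow_mul, zpow_natCast, hx, one_zpow, mul_one]

theorem pow_zpow_eq_zpow_mul {G : Type*} [DivisionMonoid G] (x : G) (n : ℕ) (j : ℤ) :
    (x ^ n) ^ j = x ^ (n * j) := by
  rw [zpow_mul, zpow_natCast]

section SeventhRoot

variable {K : Type*} [Field K] {ζ : K}

theorem zpow_eq_zpow_of_modEq_seven (hζ : IsPrimitiveRoot ζ 7) {i j : ℤ}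
    (hij : i ≡ j [ZMOD 7]) : ζ ^ i = ζ ^ j :=
  zpow_eq_zpow_of_modEq₀ (hζ.ne_zero (by decide)) hζ.pow_eq_one hij

theorem seven_ne_zero_of_isPrimitiveRoot (hζ : IsPrimitiveRoot ζ 7) : (7 : K) ≠ 0 :=
  (IsPrimitiveRoot.neZero' (n := 7) hζ).ne

theorem sum_powers_eq_zero_of_isPrimitiveRoot_seven (hζ : IsPrimitiveRoot ζ 7) :
    1 + ζ + ζ ^ 2 + ζ ^ 3 + ζ ^ 4 + ζ ^ 5 + ζ ^ 6 = 0 := by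
  simpa [Finset.sum_range_succ] using hζ.geom_sum_eq_zero (by decide)

/-- The sum of `ζ ^ (s * j)` over the nonzero squares `s = 1, 2, 4` mod `7`: for a primitive
seventh root of unity `ζ` and `j` prime to `7`, a quadratic Gaussian period. -/
def squarePeriod (ζ : K) (j : ℤ) : K :=
  ζ ^ j + ζ ^ (2 * j) + ζ ^ (4 * j)

theorem squarePeriod_congr (hζ : IsPrimitiveRoot ζ 7) {i j : ℤ} (hij : i ≡ j [ZMOD 7]) :
    squarePeriod ζ i = squarePeriod ζ j := by
  simp only [squarePeriod, zpow_eq_zpow_of_modEq_seven hζ hij,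
    zpow_eq_zpow_of_modEq_seven hζ (hij.mul_left 2),
    zpow_eq_zpow_of_modEq_seven hζ (hij.mul_left 4)]

theorem squarePeriod_two_mul (hζ : IsPrimitiveRoot ζ 7) (j : ℤ) :
    squarePeriod ζ (2 * j) = squarePeriod ζ j := by
  have h8 : ζ ^ (4 * (2 * j)) = ζ ^ j :=
    zpow_eq_zpow_of_modEq_seven hζ (Int.modEq_iff_dvd.2 ⟨-j, by ring⟩)
  have h4 : ζ ^ (2 * (2 * j)) = ζ ^ (4 * j) := congrArg (ζ ^ ·) (by ring)
  rw [squarePeriod, squarePeriod, h8, h4]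
  ring

theorem squarePeriod_zero : squarePeriod ζ 0 = 3 := by
  norm_num [squarePeriod]

theorem squarePeriod_one : squarePeriod ζ 1 = ζ + ζ ^ 2 + ζ ^ 4 := by
  simp [squarePeriod, zpow_ofNat]

theorem squarePeriod_three (hζ : IsPrimitiveRoot ζ 7) :
    squarePeriod ζ 3 = ζ ^ 3 + ζ ^ 5 + ζ ^ 6 := by
  have h12 : ζ ^ (12 : ℤ) = ζ ^ (5 : ℤ) := zpow_eq_zpow_of_modEq_seven hζ (by decide)
  simp only [squarePeriod, Int.reduceMul, h12, zpow_ofNat]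
  ring

theorem squarePeriod_eq_ite (hζ : IsPrimitiveRoot ζ 7) (j : ℤ) :
    squarePeriod ζ j =
      if j % 7 = 0 then 3
      else if j % 7 ∈ ({1, 2, 4} : Finset ℤ) then ζ + ζ ^ 2 + ζ ^ 4
      else ζ ^ 3 + ζ ^ 5 + ζ ^ 6 := by
  have h2 : squarePeriod ζ 2 = squarePeriod ζ 1 := squarePeriod_two_mul hζ 1
  have h4 : squarePeriod ζ 4 = squarePeriod ζ 1 := (squarePeriod_two_mul hζ 2).trans h2
  have h6 : squarePeriod ζ 6 = squarePeriod ζ 3 := squarePeriod_two_mul hζ 3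
  have h5 : squarePeriod ζ 5 = squarePeriod ζ 3 :=
    (squarePeriod_congr hζ (by decide)).trans ((squarePeriod_two_mul hζ 6).trans h6)
  rw [squarePeriod_congr hζ (Int.mod_modEq j 7).symm]
  have hlower : 0 ≤ j % 7 := Int.emod_nonneg j (by decide)
  have hupper : j % 7 < 7 := Int.emod_lt_of_pos j (by decide)
  interval_cases j % 7 <;>
    simp [squarePeriod_zero, squarePeriod_one, squarePeriod_three hζ, h2, h4, h5, h6]

/-- The contribution of a fixed point to the holomorphic Lefschetz number of an automorphism
acting with weights `x` and `x ^ 3` on the cotangent space there and by `x ^ m` on the fibre of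
the line bundle. -/
def fixedPointTerm (x : K) (m : ℤ) : K :=
  x ^ m / ((1 - x) * (1 - x ^ 3))

theorem seven_mul_fixedPointTerm {x : K} (hx : IsPrimitiveRoot x 7) (m : ℤ) :
    7 * fixedPointTerm x m =
      3 * x ^ m + x ^ (m + 1) + x ^ (m + 2) + 3 * x ^ (m + 3) - x ^ (m + 5) := by
  have hden : (1 - x) * (1 - x ^ 3) ≠ 0 :=
    mul_ne_zero (sub_ne_zero.2 (hx.ne_one (by decide)).symm)
      (sub_ne_zero.2 (hx.pow_ne_one_of_pos_of_lt (by decide) (by decide)).symm)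
  -- The cofactor is the product of
  -- `7 / (1 - y) = 6 + 5 * y + 4 * y ^ 2 + 3 * y ^ 3 + 2 * y ^ 4 + y ^ 5` at `y = x` and
  -- `y = x ^ 3`, divided by `7` and reduced modulo `1 + x + ⋯ + x ^ 6`.
  have hinv : (1 - x) * (1 - x ^ 3) * (3 + x + x ^ 2 + 3 * x ^ 3 - x ^ 5) = 7 := by
    linear_combination (3 + x - x ^ 2) * hx.pow_eq_one
      - sum_powers_eq_zero_of_isPrimitiveRoot_seven hx
  simp only [zpow_add₀ (hx.ne_zero (by decide)), zpow_ofNat]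
  rw [fixedPointTerm, mul_div_assoc', div_eq_iff hden]
  linear_combination -x ^ m * hinv

theorem seven_mul_sum_fixedPointTerm (hζ : IsPrimitiveRoot ζ 7) (m : ℤ) :
    7 * (fixedPointTerm ζ m + fixedPointTerm (ζ ^ 2) m + fixedPointTerm (ζ ^ 4) m) =
      3 * squarePeriod ζ m + squarePeriod ζ (m + 1) + squarePeriod ζ (m + 2) +
        3 * squarePeriod ζ (m + 3) - squarePeriod ζ (m + 5) := by
  rw [mul_add, mul_add, seven_mul_fixedPointTerm hζ,
    seven_mul_fixedPointTerm (hζ.pow_of_coprime 2 (by decide)),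
    seven_mul_fixedPointTerm (hζ.pow_of_coprime 4 (by decide))]
  simp only [squarePeriod, pow_zpow_eq_zpow_mul, Nat.cast_ofNat]
  ring

theorem sum_fixedPointTerm_eq (hζ : IsPrimitiveRoot ζ 7) (k : ℤ) :
    fixedPointTerm ζ (6 * k) + fixedPointTerm (ζ ^ 2) (6 * k) + fixedPointTerm (ζ ^ 4) (6 * k) =
      ζ ^ (6 * k) / ((1 - ζ) * (1 - ζ ^ 3)) +
      ζ ^ (5 * k) / ((1 - ζ ^ 2) * (1 - ζ ^ 6)) +
      ζ ^ (3 * k) / ((1 - ζ ^ 4) * (1 - ζ ^ 5)) := by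
  have h5 : (ζ ^ 2) ^ (6 * k) = ζ ^ (5 * k) :=
    (pow_zpow_eq_zpow_mul ζ 2 _).trans <|
      zpow_eq_zpow_of_modEq_seven hζ (Int.modEq_iff_dvd.2 ⟨-k, by push_cast; ring⟩)
  have h3 : (ζ ^ 4) ^ (6 * k) = ζ ^ (3 * k) :=
    (pow_zpow_eq_zpow_mul ζ 4 _).trans <|
      zpow_eq_zpow_of_modEq_seven hζ (Int.modEq_iff_dvd.2 ⟨-(3 * k), by push_cast; ring⟩)
  have h12 : (ζ ^ 4) ^ 3 = ζ ^ 5 := by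
    linear_combination ζ ^ 5 * hζ.pow_eq_one
  simp only [fixedPointTerm, h5, h3, h12, ← pow_mul, Nat.reduceMul]

theorem lefschetz_numbers_order_seven_general {T : ℤ → K} (hζ : IsPrimitiveRoot ζ 7)
    (hT : ∀ k : ℤ, T k =
      ζ ^ (6 * k) / ((1 - ζ) * (1 - ζ ^ 3)) +
      ζ ^ (5 * k) / ((1 - ζ ^ 2) * (1 - ζ ^ 6)) +
      ζ ^ (3 * k) / ((1 - ζ ^ 4) * (1 - ζ ^ 5))) :
    (∀ k : ℤ, T (k + 7) = T k) ∧
    T 0 = 1 ∧ T 1 = 0 ∧ T 2 = 0 ∧ T 3 = 1 ∧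
    T 4 = ζ ^ 3 + ζ ^ 5 + ζ ^ 6 ∧ T 5 = -1 ∧ T 6 = ζ + ζ ^ 2 + ζ ^ 4 := by
  have hperiodic (m k : ℤ) : ζ ^ (m * (k + 7)) = ζ ^ (m * k) :=
    zpow_eq_zpow_of_modEq_seven hζ (Int.ModEq.mul_left m (by simp))
  have hvalue {k : ℤ} {t : K}
      (ht : 3 * squarePeriod ζ (6 * k) + squarePeriod ζ (6 * k + 1) + squarePeriod ζ (6 * k + 2) +
        3 * squarePeriod ζ (6 * k + 3) - squarePeriod ζ (6 * k + 5) = 7 * t) : T k = t := by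
    refine mul_left_cancel₀ (seven_ne_zero_of_isPrimitiveRoot hζ) ?_
    rw [hT, ← sum_fixedPointTerm_eq hζ, seven_mul_sum_fixedPointTerm hζ, ht]
  have hsum := sum_powers_eq_zero_of_isPrimitiveRoot_seven hζ
  refine ⟨fun k ↦ by simp only [hT, hperiodic], hvalue ?_, hvalue ?_, hvalue ?_, hvalue ?_,
    hvalue ?_, hvalue ?_, hvalue ?_⟩ <;> simp +decide only [squarePeriod_eq_ite hζ, reduceIte]
  · linear_combination 2 * hsum
  · linear_combination 3 * hsum
  · linear_combination 3 * hsum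
  · linear_combination 2 * hsum
  · ring
  · linear_combination 4 * hsum
  · ring

end SeventhRoot

theorem lefschetz_numbers_order_seven (ζ : ℂ) (T : ℤ → ℂ)
    (hζ : ζ = Complex.exp (2 * Real.pi * Complex.I / 7))
    (hT : ∀ k : ℤ, T k =
      ζ ^ (6 * k) / ((1 - ζ) * (1 - ζ ^ 3)) +
      ζ ^ (5 * k) / ((1 - ζ ^ 2) * (1 - ζ ^ 6)) +
      ζ ^ (3 * k) / ((1 - ζ ^ 4) * (1 - ζ ^ 5))) :
    (∀ k : ℤ, T (k + 7) = T k) ∧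
    T 0 = 1 ∧ T 1 = 0 ∧ T 2 = 0 ∧ T 3 = 1 ∧
    T 4 = ζ ^ 3 + ζ ^ 5 + ζ ^ 6 ∧ T 5 = -1 ∧ T 6 = ζ + ζ ^ 2 + ζ ^ 4 :=
  lefschetz_numbers_order_seven_general
    (hζ ▸ mod_cast Complex.isPrimitiveRoot_exp 7 (by decide)) hT
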